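/- Fix a rewrite order ⊴. If G ⊆ R^m is a rewrite basis (i.e., a rewrite basis in every term), then ‾G = {‾g : g ∈ G} is a Gröbner basis of the ideal ⟨f_1,…,f_m⟩ of R generated by f_1,…,f_m. -/

import Mathlib

namespace SigGB

noncomputable section

/-- Power-products in `n` indeterminates, written additively as exponent vectors
(so the power-product `1` is `0`, and multiplication of power-products is `+`). -/
abbrev PP (n : ℕ) : Type := Fin n →₀ ℕ

/-- Terms: a power-product together with a component index (`t·e_i ↝ (t, i)`). -/
abbrev Term (n m : ℕ) : Type := PP n × Fin m

/-- Multiplication of a term by a power-product: `t ⊗ (s·e_i) = (t·s)·e_i`. -/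
def mulTerm {n m : ℕ} (t : PP n) (u : Term n m) : Term n m := (t + u.1, u.2)

/-- Divisibility of terms: `u ∣ v` iff `v = t ⊗ u` for some power-product `t`. -/
def termDvd {n m : ℕ} (u v : Term n m) : Prop := ∃ t : PP n, v = mulTerm t u

/-- Componentwise lcm of power-products. -/
noncomputable def lcmPP {n : ℕ} (s t : PP n) : PP n := Finsupp.zipWith max (max_self 0) s t

/-- Strict part of a relation. -/
def strict {α : Type*} (r : α → α → Prop) (x y : α) : Prop := r x y ∧ x ≠ y

/-- `ple` is an admissible order on power-products and `tle` is a compatible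
linear order on terms. -/
structure OrdersOK {n m : ℕ} (ple : PP n → PP n → Prop)
    (tle : Term n m → Term n m → Prop) : Prop where
  ple_refl : ∀ t, ple t t
  ple_trans : ∀ s t u, ple s t → ple t u → ple s u
  ple_antisymm : ∀ s t, ple s t → ple t s → s = t
  ple_total : ∀ s t, ple s t ∨ ple t s
  ple_one_le : ∀ t, ple 0 t
  ple_mul : ∀ (t s₁ s₂ : PP n), ple s₁ s₂ → ple (t + s₁) (t + s₂)
  tle_refl : ∀ u, tle u u
  tle_trans : ∀ u v w, tle u v → tle v w → tle u w
  tle_antisymm : ∀ u v, tle u v → tle v u → u = v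
  tle_total : ∀ u v, tle u v ∨ tle v u
  tle_mul : ∀ (t : PP n) (u v : Term n m), tle u v → tle (mulTerm t u) (mulTerm t v)
  tle_compat : ∀ (s t : PP n) (i j : Fin m), ple s t → i ≤ j → tle (s, i) (t, j)

variable {K : Type*} [Field K] {n m : ℕ} [NeZero m]

variable (f : Fin m → MvPolynomial (Fin n) K)
variable (ple : PP n → PP n → Prop)
variable (tle : Term n m → Term n m → Prop)

/-- The module homomorphism `R^m → R` determined by `e_i ↦ f i`, i.e. `a ↦ ‾a`. -/
def bar (a : Fin m → MvPolynomial (Fin n) K) : MvPolynomial (Fin n) K := ∑ i, a i * f i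

/-- Multiplication of a module element by a coefficient `c` and a power-product `t`. -/
noncomputable def monomMul (c : K) (t : PP n) (a : Fin m → MvPolynomial (Fin n) K) :
    Fin m → MvPolynomial (Fin n) K :=
  fun i => MvPolynomial.monomial t c * a i

/-- The coefficient of a term in a module element. -/
def coeffM (a : Fin m → MvPolynomial (Fin n) K) (u : Term n m) : K :=
  MvPolynomial.coeff u.1 (a u.2)

open Classical in
/-- Leading power-product of a polynomial w.r.t. `ple`
(junk value `0`, i.e. the power-product `1`, for the zero polynomial). -/
noncomputable def lp (p : MvPolynomial (Fin n) K) : PP n :=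
  if h : ∃ t, MvPolynomial.coeff t p ≠ 0 ∧ ∀ s, MvPolynomial.coeff s p ≠ 0 → ple s t
  then h.choose else 0

/-- Leading coefficient of a polynomial w.r.t. `ple`. -/
noncomputable def lc (p : MvPolynomial (Fin n) K) : K := MvPolynomial.coeff (lp ple p) p

open Classical in
/-- Signature of a module element: its `tle`-largest term with nonzero coefficient
(junk value for `0`). -/
noncomputable def sig (a : Fin m → MvPolynomial (Fin n) K) : Term n m :=
  if h : ∃ u, coeffM a u ≠ 0 ∧ ∀ v, coeffM a v ≠ 0 → tle v u
  then h.choose else ((0 : PP n), (0 : Fin m))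

/-- Leading coefficient of a module element. -/
noncomputable def lcM (a : Fin m → MvPolynomial (Fin n) K) : K := coeffM a (sig tle a)

/-- One-step s-reduction of `a` to `b` modulo `G`, witnessed by `g ∈ G` and the
power-product `t`. -/
def RedStepWith (G : Set (Fin m → MvPolynomial (Fin n) K))
    (a b g : Fin m → MvPolynomial (Fin n) K) (t : PP n) : Prop :=
  g ∈ G ∧ bar f g ≠ 0 ∧
    MvPolynomial.coeff (t + lp ple (bar f g)) (bar f a) ≠ 0 ∧
    b = a - monomMul (MvPolynomial.coeff (t + lp ple (bar f g)) (bar f a) / lc ple (bar f g)) t g ∧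
    tle (mulTerm t (sig tle g)) (sig tle a)

/-- The step witnessed by `g` and `t` is regular: `t ⊗ 𝔰(g) ≺_t 𝔰(a)`. -/
def RegularWith (a g : Fin m → MvPolynomial (Fin n) K) (t : PP n) : Prop :=
  strict tle (mulTerm t (sig tle g)) (sig tle a)

/-- The step witnessed by `g` and `t` is top: `t·lp(‾g) = lp(‾a)`. -/
def TopWith (a g : Fin m → MvPolynomial (Fin n) K) (t : PP n) : Prop :=
  t + lp ple (bar f g) = lp ple (bar f a)

/-- `a` s-reduces to `b` modulo `G` in one step. -/
def SigRedStep (G : Set (Fin m → MvPolynomial (Fin n) K))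
    (a b : Fin m → MvPolynomial (Fin n) K) : Prop :=
  ∃ g t, RedStepWith f ple tle G a b g t

/-- `a` regular s-reduces to `b` modulo `G` in one step. -/
def RegRedStep (G : Set (Fin m → MvPolynomial (Fin n) K))
    (a b : Fin m → MvPolynomial (Fin n) K) : Prop :=
  ∃ g t, RedStepWith f ple tle G a b g t ∧ RegularWith tle a g t

/-- `a` regular top s-reduces to `b` modulo `G` in one step. -/
def RegTopRedStep (G : Set (Fin m → MvPolynomial (Fin n) K))
    (a b : Fin m → MvPolynomial (Fin n) K) : Prop :=
  ∃ g t, RedStepWith f ple tle G a b g t ∧ RegularWith tle a g t ∧ TopWith f ple a g t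

/-- `a` is regular s-irreducible modulo `G`. -/
def RegIrred (G : Set (Fin m → MvPolynomial (Fin n) K))
    (a : Fin m → MvPolynomial (Fin n) K) : Prop :=
  ∀ b, ¬ RegRedStep f ple tle G a b

/-- `a` is regular top s-irreducible modulo `G`. -/
def RegTopIrred (G : Set (Fin m → MvPolynomial (Fin n) K))
    (a : Fin m → MvPolynomial (Fin n) K) : Prop :=
  ∀ b, ¬ RegTopRedStep f ple tle G a b

/-- `a` s-reduces to zero modulo `G`. -/
def SigRedZero (G : Set (Fin m → MvPolynomial (Fin n) K))
    (a : Fin m → MvPolynomial (Fin n) K) : Prop :=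
  ∃ b, Relation.ReflTransGen (SigRedStep f ple tle G) a b ∧ bar f b = 0

/-- `a` regular s-reduces to zero modulo `G`. -/
def RegRedZero (G : Set (Fin m → MvPolynomial (Fin n) K))
    (a : Fin m → MvPolynomial (Fin n) K) : Prop :=
  ∃ b, Relation.ReflTransGen (RegRedStep f ple tle G) a b ∧ bar f b = 0

/-- `G` is a signature Gröbner basis in the term `u`. -/
def IsSigGBIn (G : Set (Fin m → MvPolynomial (Fin n) K)) (u : Term n m) : Prop :=
  ∀ a : Fin m → MvPolynomial (Fin n) K, a ≠ 0 → sig tle a = u → SigRedZero f ple tle G a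

/-- `G` is a signature Gröbner basis up to the term `u`. -/
def IsSigGBUpto (G : Set (Fin m → MvPolynomial (Fin n) K)) (u : Term n m) : Prop :=
  ∀ v, strict tle v u → IsSigGBIn f ple tle G v

/-- `u` is a syzygy signature. -/
def IsSyzSig (u : Term n m) : Prop :=
  ∃ a : Fin m → MvPolynomial (Fin n) K, a ≠ 0 ∧ sig tle a = u ∧ bar f a = 0

/-- The sig-poly-pair `(𝔰(a), ‾a)` of a module element `a`. -/
noncomputable def sppOf (a : Fin m → MvPolynomial (Fin n) K) :
    Term n m × MvPolynomial (Fin n) K :=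
  (sig tle a, bar f a)

/-- `x` is a sig-poly-pair. -/
def IsSPP (x : Term n m × MvPolynomial (Fin n) K) : Prop :=
  ∃ a : Fin m → MvPolynomial (Fin n) K, a ≠ 0 ∧ sppOf f tle a = x

/-- `ro` is a rewrite order. -/
def IsRewriteOrder
    (ro : Term n m × MvPolynomial (Fin n) K → Term n m × MvPolynomial (Fin n) K → Prop) :
    Prop :=
  (∀ x, IsSPP f tle x → ro x x) ∧
  (∀ x y z, IsSPP f tle x → IsSPP f tle y → IsSPP f tle z → ro x y → ro y z → ro x z) ∧
  (∀ x y, IsSPP f tle x → IsSPP f tle y → (ro x y ∨ ro y x)) ∧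
  (∀ x y, IsSPP f tle x → IsSPP f tle y → ro x y → ro y x → x.1 = y.1) ∧
  (∀ (G : Set (Fin m → MvPolynomial (Fin n) K)) (a b : Fin m → MvPolynomial (Fin n) K),
    IsSigGBUpto f ple tle G (sig tle b) → a ∈ G → b ∈ G → a ≠ 0 → b ≠ 0 →
    termDvd (sig tle a) (sig tle b) → RegTopIrred f ple tle G b →
    ro (sppOf f tle a) (sppOf f tle b))

/-- `a` is a canonical rewriter in the term `u` w.r.t. `G` (for the rewrite order `ro`). -/
def IsCanonRewriter
    (ro : Term n m × MvPolynomial (Fin n) K → Term n m × MvPolynomial (Fin n) K → Prop)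
    (G : Set (Fin m → MvPolynomial (Fin n) K)) (u : Term n m)
    (a : Fin m → MvPolynomial (Fin n) K) : Prop :=
  a ∈ G ∧ a ≠ 0 ∧ termDvd (sig tle a) u ∧
    ∀ g ∈ G, g ≠ 0 → termDvd (sig tle g) u → ro (sppOf f tle g) (sppOf f tle a)

/-- `G` is a rewrite basis in the term `u` (for the rewrite order `ro`). -/
def IsRBIn
    (ro : Term n m × MvPolynomial (Fin n) K → Term n m × MvPolynomial (Fin n) K → Prop)
    (G : Set (Fin m → MvPolynomial (Fin n) K)) (u : Term n m) : Prop :=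
  IsSyzSig f tle u ∨
    ∃ g, IsCanonRewriter f tle ro G u g ∧
      RegTopIrred f ple tle G (monomMul (1 : K) (u.1 - (sig tle g).1) g)

/-- `G` is a rewrite basis up to the term `u` (for the rewrite order `ro`). -/
def IsRBUpto
    (ro : Term n m × MvPolynomial (Fin n) K → Term n m × MvPolynomial (Fin n) K → Prop)
    (G : Set (Fin m → MvPolynomial (Fin n) K)) (u : Term n m) : Prop :=
  ∀ v, strict tle v u → IsRBIn f ple tle ro G v

/-- The S-pair of two module elements. -/
noncomputable def spair (a b : Fin m → MvPolynomial (Fin n) K) :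
    Fin m → MvPolynomial (Fin n) K :=
  monomMul ((1 : K) / lc ple (bar f a))
      (lcmPP (lp ple (bar f a)) (lp ple (bar f b)) - lp ple (bar f a)) a -
    monomMul ((1 : K) / lc ple (bar f b))
      (lcmPP (lp ple (bar f a)) (lp ple (bar f b)) - lp ple (bar f b)) b

/-- `a` and `b` give rise to a regular S-pair. -/
def IsRegularSPair (a b : Fin m → MvPolynomial (Fin n) K) : Prop :=
  bar f a ≠ 0 ∧ bar f b ≠ 0 ∧
    mulTerm (lcmPP (lp ple (bar f a)) (lp ple (bar f b)) - lp ple (bar f a)) (sig tle a) ≠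
      mulTerm (lcmPP (lp ple (bar f a)) (lp ple (bar f b)) - lp ple (bar f b)) (sig tle b)

/-- `B` is a Gröbner basis of the ideal `I` w.r.t. `ple`. -/
def IsGroebnerBasis (B : Set (MvPolynomial (Fin n) K)) (I : Ideal (MvPolynomial (Fin n) K)) :
    Prop :=
  (∀ b ∈ B, b ∈ I) ∧ Ideal.span B = I ∧
    ∀ p ∈ I, p ≠ 0 → ∃ b ∈ B, b ≠ 0 ∧ ∃ t : PP n, lp ple p = t + lp ple b

/-- One step of ordinary polynomial reduction of `p` to `q` modulo `B`. -/
def PolyRedStep (B : Set (MvPolynomial (Fin n) K)) (p q : MvPolynomial (Fin n) K) : Prop :=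
  ∃ r ∈ B, r ≠ 0 ∧ ∃ t : PP n, MvPolynomial.coeff (t + lp ple r) p ≠ 0 ∧
    q = p - MvPolynomial.monomial t (MvPolynomial.coeff (t + lp ple r) p / lc ple r) * r

/-- A nonempty finite set has a largest element for any total preorder. -/
theorem exists_greatest {α : Type*} {r : α → α → Prop} (trans : ∀ x y z, r x y → r y z → r x z)
    (total : ∀ x y, r x y ∨ r y x) {s : Set α} (hs : s.Finite) (hne : s.Nonempty) :
    ∃ x ∈ s, ∀ y ∈ s, r y x := by
  have refl : ∀ x, r x x := fun x => (total x x).elim id id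
  induction s, hs using Set.Finite.induction_on with
  | empty => exact absurd hne Set.not_nonempty_empty
  | @insert a s _ _ ih =>
    rcases s.eq_empty_or_nonempty with rfl | h
    · exact ⟨a, by simp, by simpa using refl a⟩
    · obtain ⟨x, hx, hmax⟩ := ih h
      rcases total a x with hax | hxa
      · exact ⟨x, Set.mem_insert_of_mem _ hx, by
          rintro y (rfl | hy)
          exacts [hax, hmax y hy]⟩
      · exact ⟨a, Set.mem_insert _ _, by
          rintro y (rfl | hy)
          exacts [refl _, trans _ _ _ (hmax y hy) hxa]⟩

/-- A linear order that extends a well-quasi-order is a well-order. -/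
theorem wellFounded_strict_of_le {α : Type*} [Preorder α] [WellQuasiOrderedLE α]
    {r : α → α → Prop} (trans : ∀ x y z, r x y → r y z → r x z)
    (antisymm : ∀ x y, r x y → r y x → x = y) (ext : ∀ x y, x ≤ y → r x y) :
    WellFounded (strict r) := by
  have strict_trans : ∀ x y z, strict r x y → strict r y z → strict r x z := by
    rintro x y z ⟨hxy, hne⟩ ⟨hyz, -⟩
    refine ⟨trans _ _ _ hxy hyz, ?_⟩
    rintro rfl
    exact hne (antisymm _ _ hxy hyz)
  refine wellFounded_iff_isEmpty_descending_chain.2 ⟨fun ⟨c, hc⟩ => ?_⟩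
  have desc : ∀ i k, strict r (c (i + k + 1)) (c i) := by
    intro i k
    induction k with
    | zero => exact hc i
    | succ k ih => exact strict_trans _ _ _ (hc _) ih
  obtain ⟨i, j, hij, hle⟩ := wellQuasiOrdered_le c
  obtain ⟨k, rfl⟩ := Nat.exists_eq_add_of_lt hij
  exact (desc i k).2 (antisymm _ _ (desc i k).1 (ext _ _ hle))

namespace OrdersOK

variable {ple tle}

omit [NeZero m] in
theorem ple_of_le (h : OrdersOK ple tle) {s t : PP n} (hst : s ≤ t) : ple s t := by
  simpa [add_tsub_cancel_of_le hst] using h.ple_mul s 0 (t - s) (h.ple_one_le _)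

omit [NeZero m] in
theorem wellFounded_ple (h : OrdersOK ple tle) : WellFounded (strict ple) :=
  wellFounded_strict_of_le h.ple_trans h.ple_antisymm fun _ _ => h.ple_of_le

omit [NeZero m] in
theorem wellFounded_tle (h : OrdersOK ple tle) : WellFounded (strict tle) :=
  wellFounded_strict_of_le h.tle_trans h.tle_antisymm fun u v (huv : u ≤ v) =>
    h.tle_compat u.1 v.1 u.2 v.2 (h.ple_of_le huv.1) huv.2

omit [NeZero m] in
theorem lp_spec (h : OrdersOK ple tle) {p : MvPolynomial (Fin n) K} (hp : p ≠ 0) :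
    p.coeff (lp ple p) ≠ 0 ∧ ∀ s, p.coeff s ≠ 0 → ple s (lp ple p) := by
  have key : ∃ t, p.coeff t ≠ 0 ∧ ∀ s, p.coeff s ≠ 0 → ple s t :=
    exists_greatest (s := {t | p.coeff t ≠ 0}) h.ple_trans h.ple_total
      (p.support.finite_toSet.subset fun t ht => by simpa using ht)
      (MvPolynomial.ne_zero_iff.1 hp)
  rw [lp, dif_pos key]
  exact key.choose_spec

omit [NeZero m] in
theorem lp_eq (h : OrdersOK ple tle) {p : MvPolynomial (Fin n) K} {t : PP n}
    (ht : p.coeff t ≠ 0) (hmax : ∀ s, p.coeff s ≠ 0 → ple s t) : lp ple p = t := by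
  have hp : p ≠ 0 := MvPolynomial.ne_zero_iff.2 ⟨t, ht⟩
  exact h.ple_antisymm _ _ (hmax _ (h.lp_spec hp).1) ((h.lp_spec hp).2 _ ht)

omit [NeZero m] in
theorem lp_monomial_mul (h : OrdersOK ple tle) {p : MvPolynomial (Fin n) K} (hp : p ≠ 0)
    (t : PP n) {c : K} (hc : c ≠ 0) :
    lp ple (MvPolynomial.monomial t c * p) = t + lp ple p := by
  refine h.lp_eq ?_ fun s hs => ?_
  · rw [MvPolynomial.coeff_monomial_mul]
    exact mul_ne_zero hc (h.lp_spec hp).1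
  · rw [MvPolynomial.coeff_monomial_mul'] at hs
    split_ifs at hs with hts
    · have := h.ple_mul t _ _ ((h.lp_spec hp).2 _ (right_ne_zero_of_mul hs))
      rwa [add_tsub_cancel_of_le hts] at this
    · exact absurd rfl hs

omit [NeZero m] in
/-- Subtracting a multiple of a polynomial without monomials at or above `lp p` does not change
`lp p`. -/
theorem lp_sub_smul (h : OrdersOK ple tle) {p q : MvPolynomial (Fin n) K} (hp : p ≠ 0) (c : K)
    (hq : ∀ s, q.coeff s ≠ 0 → strict ple s (lp ple p)) :
    p - c • q ≠ 0 ∧ lp ple (p - c • q) = lp ple p := by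
  have hc : (p - c • q).coeff (lp ple p) ≠ 0 := by
    have : q.coeff (lp ple p) = 0 := by
      by_contra hne
      exact (hq _ hne).2 rfl
    simpa [this] using (h.lp_spec hp).1
  refine ⟨MvPolynomial.ne_zero_iff.2 ⟨_, hc⟩, h.lp_eq hc fun s hs => ?_⟩
  by_cases hps : p.coeff s = 0
  · refine (hq s fun hqs => hs ?_).1
    simp [hps, hqs]
  · exact (h.lp_spec hp).2 s hps

theorem sig_spec (h : OrdersOK ple tle) {a : Fin m → MvPolynomial (Fin n) K} (ha : a ≠ 0) :
    coeffM a (sig tle a) ≠ 0 ∧ ∀ v, coeffM a v ≠ 0 → tle v (sig tle a) := by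
  have key : ∃ u, coeffM a u ≠ 0 ∧ ∀ v, coeffM a v ≠ 0 → tle v u := by
    refine exists_greatest (s := {u | coeffM a u ≠ 0}) h.tle_trans h.tle_total ?_ ?_
    · refine (Set.finite_iUnion fun i =>
        ((a i).support.finite_toSet.image fun t => ((t, i) : Term n m))).subset fun u hu => ?_
      exact Set.mem_iUnion.2 ⟨u.2, u.1, by simpa [coeffM] using hu, rfl⟩
    · obtain ⟨i, hi⟩ := Function.ne_iff.1 ha
      obtain ⟨t, ht⟩ := MvPolynomial.ne_zero_iff.1 hi
      exact ⟨(t, i), ht⟩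
  rw [sig, dif_pos key]
  exact key.choose_spec

theorem sig_eq (h : OrdersOK ple tle) {a : Fin m → MvPolynomial (Fin n) K} {u : Term n m}
    (hu : coeffM a u ≠ 0) (hmax : ∀ v, coeffM a v ≠ 0 → tle v u) : sig tle a = u := by
  have ha : a ≠ 0 := by
    rintro rfl
    simp [coeffM] at hu
  exact h.tle_antisymm _ _ (hmax _ (h.sig_spec ha).1) ((h.sig_spec ha).2 _ hu)

theorem sig_monomMul (h : OrdersOK ple tle) {a : Fin m → MvPolynomial (Fin n) K} (ha : a ≠ 0)
    (t : PP n) {c : K} (hc : c ≠ 0) :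
    sig tle (monomMul c t a) = mulTerm t (sig tle a) := by
  refine h.sig_eq ?_ fun v hv => ?_
  · simp only [coeffM, monomMul, mulTerm, MvPolynomial.coeff_monomial_mul]
    exact mul_ne_zero hc (h.sig_spec ha).1
  · simp only [coeffM, monomMul, MvPolynomial.coeff_monomial_mul'] at hv
    split_ifs at hv with htv
    · have := h.tle_mul t (v.1 - t, v.2) _ ((h.sig_spec ha).2 _ (right_ne_zero_of_mul hv))
      rwa [mulTerm, add_tsub_cancel_of_le htv] at this
    · exact absurd rfl hv

/-- Two nonzero module elements of equal signature can be combined so that the signature drops. -/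
theorem exists_sub_smul_sig_lt (h : OrdersOK ple tle) {a b : Fin m → MvPolynomial (Fin n) K}
    (ha : a ≠ 0) (hb : b ≠ 0) (hab : sig tle b = sig tle a) :
    ∃ c : K, a - c • b ≠ 0 → strict tle (sig tle (a - c • b)) (sig tle a) := by
  have hsa := h.sig_spec ha
  have hsb := h.sig_spec hb
  rw [hab] at hsb
  have hcoeff : ∀ (c : K) v, coeffM (a - c • b) v = coeffM a v - c * coeffM b v := fun c v => by
    simp [coeffM]
  refine ⟨coeffM a (sig tle a) / coeffM b (sig tle a), fun hd => ?_⟩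
  have hsd := h.sig_spec hd
  constructor
  · by_cases hz : coeffM a (sig tle (a - (coeffM a (sig tle a) / coeffM b (sig tle a)) • b)) = 0
    · refine hsb.2 _ fun hz' => hsd.1 ?_
      rw [hcoeff, hz, hz', mul_zero, sub_zero]
    · exact hsa.2 _ hz
  · intro heq
    refine hsd.1 ?_
    rw [heq, hcoeff, div_mul_cancel₀ _ hsb.1, sub_self]

end OrdersOK

omit [NeZero m] in
theorem bar_zero : bar f 0 = 0 := by
  simp [bar]

omit [NeZero m] in
theorem bar_sub_smul (a b : Fin m → MvPolynomial (Fin n) K) (c : K) :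
    bar f (a - c • b) = bar f a - c • bar f b := by
  simp [bar, sub_mul, Finset.sum_sub_distrib, Finset.smul_sum]

omit [NeZero m] in
theorem bar_monomMul (c : K) (t : PP n) (a : Fin m → MvPolynomial (Fin n) K) :
    bar f (monomMul c t a) = MvPolynomial.monomial t c * bar f a := by
  simp [bar, monomMul, Finset.mul_sum, mul_assoc]

omit [NeZero m] in
theorem mem_span_range_iff_exists_bar (p : MvPolynomial (Fin n) K) :
    p ∈ Ideal.span (Set.range f) ↔ ∃ a, bar f a = p := by
  simp [Ideal.mem_span_range_iff_exists_fun, bar]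

omit [NeZero m] in
/-- A subset of an ideal whose leading power-products divide those of all nonzero elements of the
ideal is a Gröbner basis. -/
theorem OrdersOK.isGroebnerBasis (hord : OrdersOK ple tle) {B : Set (MvPolynomial (Fin n) K)}
    {I : Ideal (MvPolynomial (Fin n) K)} (hB : B ⊆ I)
    (hlp : ∀ p ∈ I, p ≠ 0 → ∃ b ∈ B, b ≠ 0 ∧ ∃ t : PP n, lp ple p = t + lp ple b) :
    IsGroebnerBasis ple B I := by
  refine ⟨fun b hb => hB hb, le_antisymm (Ideal.span_le.2 hB) fun p hp => ?_, hlp⟩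
  induction hu : lp ple p using hord.wellFounded_ple.induction generalizing p with
  | _ u ih =>
  subst hu
  by_cases hp0 : p = 0
  · exact hp0 ▸ zero_mem _
  obtain ⟨b, hb, hb0, t, ht⟩ := hlp p hp hp0
  have hlb := (hord.lp_spec hb0).1
  obtain ⟨q, hq⟩ : ∃ q, q = MvPolynomial.monomial t
      (p.coeff (lp ple p) / b.coeff (lp ple b)) * b := ⟨_, rfl⟩
  have hc : p.coeff (lp ple p) / b.coeff (lp ple b) ≠ 0 :=
    div_ne_zero (hord.lp_spec hp0).1 hlb
  have hq0 : q ≠ 0 := hq ▸ mul_ne_zero (by simpa using hc) hb0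
  have hlq : lp ple q = lp ple p := by rw [hq, hord.lp_monomial_mul hb0 t hc, ht]
  have hcq : q.coeff (lp ple p) = p.coeff (lp ple p) := by
    rw [hq, ht, MvPolynomial.coeff_monomial_mul, div_mul_cancel₀ _ hlb]
  have hqB : q ∈ Ideal.span B := hq ▸ Ideal.mul_mem_left _ _ (Ideal.subset_span hb)
  have hqI : q ∈ I := Ideal.span_le.2 hB hqB
  rw [← sub_add_cancel p q]
  refine add_mem ?_ hqB
  by_cases hd : p - q = 0
  · exact hd ▸ zero_mem _
  have hsd := hord.lp_spec hd
  refine ih _ ⟨?_, fun heq => hsd.1 ?_⟩ _ (sub_mem hp hqI) rfl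
  · by_cases hz : p.coeff (lp ple (p - q)) = 0
    · refine hlq ▸ (hord.lp_spec hq0).2 _ fun hz' => hsd.1 ?_
      rw [MvPolynomial.coeff_sub, hz, hz', sub_zero]
    · exact (hord.lp_spec hp0).2 _ hz
  · rw [heq, MvPolynomial.coeff_sub, hcq, sub_self]

/-- If every term is a syzygy signature or admits a multiple of an element of `G` with that
signature which is regular top s-irreducible, then every module element with nonzero image is top
s-reducible. -/
theorem exists_top_reducer (hord : OrdersOK ple tle) (G : Set (Fin m → MvPolynomial (Fin n) K))
    (hG : ∀ u : Term n m, IsSyzSig f tle u ∨ ∃ g ∈ G, g ≠ 0 ∧ ∃ t, u = mulTerm t (sig tle g) ∧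
      RegTopIrred f ple tle G (monomMul (1 : K) t g))
    (a : Fin m → MvPolynomial (Fin n) K) (ha : bar f a ≠ 0) :
    ∃ g ∈ G, bar f g ≠ 0 ∧ ∃ t, lp ple (bar f a) = t + lp ple (bar f g) ∧
      tle (mulTerm t (sig tle g)) (sig tle a) := by
  have ne_zero_of_bar : ∀ b : Fin m → MvPolynomial (Fin n) K, bar f b ≠ 0 → b ≠ 0 := by
    rintro b hb rfl
    exact hb (bar_zero f)
  induction hu : sig tle a using hord.wellFounded_tle.induction generalizing a with
  | _ u ih =>
  subst hu
  have ha0 := ne_zero_of_bar a ha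
  rcases hG (sig tle a) with ⟨s, hs0, hsig, hs⟩ | ⟨g, hgG, hg0, t, hsig, hirr⟩
  · obtain ⟨c, hlt⟩ := hord.exists_sub_smul_sig_lt ha0 hs0 hsig
    have hbar : bar f (a - c • s) = bar f a := by simp [bar_sub_smul, hs]
    have hd : bar f (a - c • s) ≠ 0 := hbar ▸ ha
    have hlt := hlt (ne_zero_of_bar _ hd)
    obtain ⟨g, hgG, hg, t, hlp, htle⟩ := ih _ hlt _ hd rfl
    exact ⟨g, hgG, hg, t, hbar ▸ hlp, hord.tle_trans _ _ _ htle hlt.1⟩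
  · have hbsig : sig tle (monomMul (1 : K) t g) = sig tle a := by
      rw [hord.sig_monomMul hg0 t one_ne_zero, hsig]
    have hb0 : monomMul (1 : K) t g ≠ 0 := by
      obtain ⟨i, hi⟩ := Function.ne_iff.1 hg0
      exact Function.ne_iff.2 ⟨i, mul_ne_zero (by simp) hi⟩
    have hbbar := bar_monomMul f (1 : K) t g
    set b := monomMul (1 : K) t g
    by_cases hlow : ∀ s, (bar f b).coeff s ≠ 0 → strict ple s (lp ple (bar f a))
    · obtain ⟨c, hlt⟩ := hord.exists_sub_smul_sig_lt ha0 hb0 hbsig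
      obtain ⟨hd, hlpd⟩ := hord.lp_sub_smul ha c hlow
      rw [← bar_sub_smul] at hd hlpd
      have hlt := hlt (ne_zero_of_bar _ hd)
      obtain ⟨g', hgG', hg', t', hlp, htle⟩ := ih _ hlt _ hd rfl
      exact ⟨g', hgG', hg', t', hlpd ▸ hlp, hord.tle_trans _ _ _ htle hlt.1⟩
    push Not at hlow
    obtain ⟨s, hs, hsle⟩ := hlow
    have hbne : bar f b ≠ 0 := MvPolynomial.ne_zero_iff.2 ⟨s, hs⟩
    have hgne : bar f g ≠ 0 := by
      rintro hz
      exact hbne (by rw [hbbar, hz, mul_zero])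
    have hlpb : lp ple (bar f b) = t + lp ple (bar f g) := by
      rw [hbbar, hord.lp_monomial_mul hgne t one_ne_zero]
    by_cases heq : lp ple (bar f a) = lp ple (bar f b)
    · exact ⟨g, hgG, hgne, t, heq.trans hlpb, by rw [← hsig]; exact hord.tle_refl _⟩
    exfalso
    have hab : ple (lp ple (bar f a)) (lp ple (bar f b)) := by
      rcases hord.ple_total s (lp ple (bar f a)) with h | h
      · have : s = lp ple (bar f a) := by
          by_contra hne
          exact hsle ⟨h, hne⟩
        exact this ▸ (hord.lp_spec hbne).2 s hs
      · exact hord.ple_trans _ _ _ h ((hord.lp_spec hbne).2 s hs)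
    obtain ⟨c, hlt⟩ := hord.exists_sub_smul_sig_lt hb0 ha0 hbsig.symm
    obtain ⟨hd, hlpd⟩ := hord.lp_sub_smul (q := bar f a) hbne c fun r hr => by
      have har := (hord.lp_spec ha).2 r hr
      refine ⟨hord.ple_trans _ _ _ har hab, ?_⟩
      rintro rfl
      exact heq (hord.ple_antisymm _ _ hab har)
    rw [← bar_sub_smul] at hd hlpd
    have hlt := hlt (ne_zero_of_bar _ hd)
    obtain ⟨g', hgG', hg', t', hlp, htle⟩ := ih _ (hbsig ▸ hlt) _ hd rfl
    have htop : t' + lp ple (bar f g') = lp ple (bar f b) := hlp.symm.trans hlpd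
    have hreg : strict tle (mulTerm t' (sig tle g')) (sig tle b) := by
      refine ⟨hord.tle_trans _ _ _ htle hlt.1, fun h => hlt.2 ?_⟩
      exact hord.tle_antisymm _ _ hlt.1 (h ▸ htle)
    exact hirr _ ⟨g', t', ⟨hgG', hg', htop ▸ (hord.lp_spec hbne).1, rfl, hreg.1⟩, hreg, htop⟩

/-- if `G` is a rewrite basis (in every term), then `‾G` is a Gröbner
basis of the ideal generated by `f_1, …, f_m`. -/
theorem rb_is_groebner (hord : OrdersOK ple tle)
    (ro : Term n m × MvPolynomial (Fin n) K → Term n m × MvPolynomial (Fin n) K → Prop)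
    (hro : IsRewriteOrder f ple tle ro)
    (G : Set (Fin m → MvPolynomial (Fin n) K))
    (hRB : ∀ u : Term n m, IsRBIn f ple tle ro G u) :
    IsGroebnerBasis ple (bar f '' G) (Ideal.span (Set.range f)) := by
  have hred := exists_top_reducer f ple tle hord G fun u => by
    rcases hRB u with h | ⟨g, ⟨hgG, hg0, ⟨t, ht⟩, -⟩, hirr⟩
    · exact .inl h
    · refine .inr ⟨g, hgG, hg0, t, ht, ?_⟩
      rwa [ht, mulTerm, add_tsub_cancel_right] at hirr
  refine hord.isGroebnerBasis ple tle ?_ fun p hp hp0 => ?_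
  · rintro _ ⟨a, -, rfl⟩
    exact (mem_span_range_iff_exists_bar f _).2 ⟨a, rfl⟩
  · obtain ⟨a, rfl⟩ := (mem_span_range_iff_exists_bar f p).1 hp
    obtain ⟨g, hgG, hg, t, ht, -⟩ := hred a hp0
    exact ⟨_, ⟨g, hgG, rfl⟩, hg, t, ht⟩

end

end SigGB
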